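/- Let x be a real number and let (q_n) be any sequence of positive real numbers. Then the inequality p_{n+1}^x - p_n^x < (p_n * p_{n+1})^x / (q_n * p_{n+1}) + p_n^x * (q_{n+1} - q_n) / q_n holds for infinitely many values of n, where p_n denotes the n-th prime number. -/

import Mathlib

/-- `nthPrime n` is the `n`-th prime number with 1-based indexing:
`nthPrime 1 = 2`, `nthPrime 2 = 3`, `nthPrime 3 = 5`, ... -/
noncomputable def nthPrime (n : ℕ) : ℕ := Nat.nth Nat.Prime (n - 1)

theorem not_summable_nth_prime :
    ¬ Summable (fun n : ℕ => (1 : ℝ) / (Nat.nth Nat.Prime n : ℝ)) := by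
  intro h
  apply not_summable_one_div_on_primes
  have hinj : Function.Injective (Nat.nth Nat.Prime) :=
    Nat.nth_injective Nat.infinite_setOf_prime
  rw [← hinj.summable_iff]
  · refine h.congr fun n => ?_
    have : Nat.nth Nat.Prime n ∈ {p : ℕ | p.Prime} := Nat.prime_nth_prime n
    simp only [Function.comp_apply]
    rw [Set.indicator_of_mem this]
  · intro m hm
    rw [Nat.range_nth_of_infinite Nat.infinite_setOf_prime] at hm
    exact Set.indicator_of_notMem hm _

/-- For any real `x` and any positive sequence `q`, the inequality
`p (n+1) ^ x - p n ^ x < (p n * p (n+1)) ^ x / (q n * p (n+1)) + p n ^ x * (q (n+1) - q n) / q n`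
holds for infinitely many positive integers `n`. -/
theorem gaps_of_powers_general_bound (x : ℝ) (q : ℕ → ℝ) (hq : ∀ n, 0 < q n) :
    ∃ᶠ n in Filter.atTop, 1 ≤ n ∧
      (nthPrime (n + 1) : ℝ) ^ x - (nthPrime n : ℝ) ^ x
        < ((nthPrime n : ℝ) * (nthPrime (n + 1) : ℝ)) ^ x / (q n * (nthPrime (n + 1) : ℝ))
          + (nthPrime n : ℝ) ^ x * (q (n + 1) - q n) / q n := by
  intro hcon
  obtain ⟨N, hN⟩ := Filter.eventually_atTop.mp hcon
  have hpos : ∀ n, (0 : ℝ) < (nthPrime n : ℝ) := fun n => by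
    exact_mod_cast (Nat.prime_nth_prime (n - 1)).pos
  have hstep : ∀ n, N + 1 ≤ n → 1 / (nthPrime (n + 1) : ℝ)
      ≤ q n / (nthPrime n : ℝ) ^ x - q (n + 1) / (nthPrime (n + 1) : ℝ) ^ x := by
    intro n hn
    have h := hN n (by omega)
    have h2 := not_lt.mp (fun h' => h ⟨by omega, h'⟩)
    rw [Real.mul_rpow (hpos n).le (hpos (n + 1)).le] at h2
    have ha := Real.rpow_pos_of_pos (hpos n) x
    have hb := Real.rpow_pos_of_pos (hpos (n + 1)) x
    have hp := hpos (n + 1)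
    have hqn := hq n
    generalize (nthPrime n : ℝ) ^ x = a at *
    generalize (nthPrime (n + 1) : ℝ) ^ x = b at *
    generalize (nthPrime (n + 1) : ℝ) = p at *
    generalize q (n + 1) = r at *
    generalize q n = s at *
    have e : s / a - r / b - 1 / p
        = (b - a - (a * b / (s * p) + a * (r - s) / s)) * (s / (a * b)) := by
      field_simp
      ring
    have : 0 ≤ s / a - r / b - 1 / p := by
      rw [e]
      exact mul_nonneg (by linarith) (by positivity)
    linarith
  apply not_summable_nth_prime
  rw [← summable_nat_add_iff (N + 1)]
  have hb : ∀ n, 0 ≤ q n / (nthPrime n : ℝ) ^ x := fun n =>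
    (div_pos (hq n) (Real.rpow_pos_of_pos (hpos n) x)).le
  have key : ∀ m, ∑ i ∈ Finset.range m, (1 : ℝ) / (Nat.nth Nat.Prime (i + (N + 1)) : ℝ)
      ≤ q (N + 1) / (nthPrime (N + 1) : ℝ) ^ x
        - q (m + (N + 1)) / (nthPrime (m + (N + 1)) : ℝ) ^ x := by
    intro m
    induction m with
    | zero => simp
    | succ k ih =>
      rw [Finset.sum_range_succ]
      have h := hstep (k + (N + 1)) (by omega)
      have e1 : k + 1 + (N + 1) = k + (N + 1) + 1 := by omega
      have e2 : nthPrime (k + (N + 1) + 1) = Nat.nth Nat.Prime (k + (N + 1)) := rfl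
      rw [e1]
      rw [← e2]
      linarith
  refine summable_of_sum_range_le (c := q (N + 1) / (nthPrime (N + 1) : ℝ) ^ x)
    (fun n => by positivity) fun m => ?_
  have := key m
  have := hb (m + (N + 1))
  linarith
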